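/- (Theorem 1, third-order part, first alternative.) Assume the IMEX Runge–Kutta coefficients satisfy the third-order conditions of additive Runge–Kutta methods: Σ_{i} ω̃_i = Σ_{i} ω_i = 1; with c̃_i := Σ_{j} ã_{ij} and c_i := Σ_{j} a_{ij}, Σ_{i} w_i d_i = 1/2 for every choice w ∈ {ω̃, ω}, d ∈ {c̃, c}; Σ_{i} w_i d_i e_i = 1/3 for every choice w ∈ {ω̃, ω}, d, e ∈ {c̃, c}; and Σ_{i,j} w_i m_{ij} d_j = 1/6 for every choice w ∈ {ω̃, ω}, m ∈ {ã, a}, d ∈ {c̃, c}. Assume in addition, with γ̃_i := Σ_{j} α̃_{ij} and γ_i := Σ_{j} α_{ij}, that Σ_{i} ω_i γ_i² = 1/3, Σ_{i} ω_i γ̃_i² = 1/3, and Σ_{i} ω_i γ_i γ̃_i = 1/3. Then the combined forward–adjoint scheme is of third order: for every exact solution (y, p̃, p) of the coupled system with p̃(0) = p(0) there exist constants C > 0 and h₀ > 0 such that for every 0 < h ≤ h₀, any one step of the combined scheme started at (y(0), p̃(0), p(0)) with p̃_n = p_n, whose stage values Y^(i), P̃^(i), P^(i) satisfy the stage equations and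 lie within distance 1 of y(0) and p(0) respectively, satisfies ‖y_{n+1} − y(h)‖ + ‖p̃_{n+1} − p̃(h)‖ + ‖p_{n+1} − p(h)‖ ≤ C h⁴. -/

import Mathlib

open Finset Matrix

/-- The Jacobian matrix of a map `g : ℝ^d → ℝ^d` at `x`:
entry `(i, j)` is `∂ g_i / ∂ x_j (x)`. -/
noncomputable def jacMat {d : ℕ} (g : (Fin d → ℝ) → (Fin d → ℝ))
    (x : Fin d → ℝ) : Matrix (Fin d) (Fin d) ℝ :=
  fun i j => fderiv ℝ g x (Pi.single j 1) i


section Gen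
open Asymptotics Filter Topology

variable {V W : Type*} [NormedAddCommGroup V] [NormedSpace ℝ V]
  [NormedAddCommGroup W] [NormedSpace ℝ W]

theorem mv_bigO (R : V → W) (R' : V → V →L[ℝ] W) (z0 : V) (n : ℕ)
    (hR : ∀ z, HasFDerivAt R (R' z) z) (h0 : R z0 = 0)
    (hO : R' =O[𝓝 z0] fun z => ‖z - z0‖ ^ n) :
    R =O[𝓝 z0] fun z => ‖z - z0‖ ^ (n + 1) := by
  obtain ⟨C, hC⟩ := hO.bound
  obtain ⟨δ, hδ, hb⟩ := Metric.eventually_nhds_iff_ball.1 hC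
  refine IsBigO.of_bound |C| ?_
  filter_upwards [Metric.ball_mem_nhds z0 hδ] with z hz
  have hz' : ‖z - z0‖ < δ := by simpa [dist_eq_norm] using hz
  have key := Convex.norm_image_sub_le_of_norm_hasFDerivWithin_le (f := R) (f' := R')
    (s := Metric.closedBall z0 ‖z - z0‖) (C := |C| * ‖z - z0‖ ^ n) (x := z0) (y := z)
    (fun x _ => (hR x).hasFDerivWithinAt) (fun x hx => by
      have hx' : ‖x - z0‖ ≤ ‖z - z0‖ := by simpa [dist_eq_norm] using hx
      have h1 := hb x (by simpa [dist_eq_norm] using lt_of_le_of_lt hx' hz')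
      refine h1.trans ?_
      rw [norm_pow, norm_norm]
      gcongr
      exact le_abs_self C)
    (convex_closedBall _ _) (by simp) (by simp [dist_eq_norm])
  rw [h0, sub_zero] at key
  rw [norm_pow, norm_norm, pow_succ, ← mul_assoc]
  exact key

theorem taylor_one (F : V → W) (hF : ContDiff ℝ (⊤ : ℕ∞) F) (z0 : V) :
    (fun z => F z - F z0 - fderiv ℝ F z0 (z - z0)) =O[𝓝 z0] fun z => ‖z - z0‖ ^ 2 := by
  have hF' : ContDiff ℝ (⊤ : ℕ∞) (fderiv ℝ F) := hF.fderiv_right (by simp)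
  refine mv_bigO _ (fun z => fderiv ℝ F z - fderiv ℝ F z0) z0 1 (fun z => ?_) (by simp) ?_
  · have h1 := (hF.differentiable (by simp) z).hasFDerivAt
    have h2 : HasFDerivAt (fun z => fderiv ℝ F z0 (z - z0)) (fderiv ℝ F z0) z := 
      (fderiv ℝ F z0).hasFDerivAt.comp z ((hasFDerivAt_id z).sub_const z0)
    exact (h1.sub_const _).sub h2
  · have := (hF'.differentiable (by simp) z0).isBigO_sub
    simpa using this.norm_right

theorem taylor_two (F : V → W) (hF : ContDiff ℝ (⊤ : ℕ∞) F) (z0 : V) :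
    (fun z => F z - F z0 - fderiv ℝ F z0 (z - z0)
      - (1/2 : ℝ) • fderiv ℝ (fderiv ℝ F) z0 (z - z0) (z - z0))
      =O[𝓝 z0] fun z => ‖z - z0‖ ^ 3 := by
  have hF' : ContDiff ℝ (⊤ : ℕ∞) (fderiv ℝ F) := hF.fderiv_right (by simp)
  refine mv_bigO _ (fun z => fderiv ℝ F z - fderiv ℝ F z0
    - fderiv ℝ (fderiv ℝ F) z0 (z - z0)) z0 2 (fun z => ?_) (by simp) (taylor_one _ hF' z0)
  have h1 := (hF.differentiable (by simp) z).hasFDerivAt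
  have hs := (hasFDerivAt_id (𝕜 := ℝ) z).sub_const z0
  have h2 : HasFDerivAt (fun z => fderiv ℝ F z0 (z - z0)) (fderiv ℝ F z0) z := 
    (fderiv ℝ F z0).hasFDerivAt.comp z hs
  have h3 := ((fderiv ℝ (fderiv ℝ F) z0).hasFDerivAt.comp z hs).clm_apply hs
  have hsym : IsSymmSndFDerivAt ℝ F z0 :=
    (hF.contDiffAt (x := z0)).isSymmSndFDerivAt (by
      simpa using (WithTop.coe_le_coe.2 (le_top : (2 : ℕ∞) ≤ ⊤)))
  refine (((h1.sub_const _).sub h2).sub (h3.const_smul (1/2 : ℝ))).congr_fderiv ?_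
  ext v
  have := hsym v (z - z0)
  simp only [_root_.sub_apply, _root_.smul_apply,
    _root_.add_apply, ContinuousLinearMap.comp_apply, 
    ContinuousLinearMap.flip_apply, ContinuousLinearMap.coe_id', id, Function.comp]
  rw [this, ← two_smul ℝ, smul_smul]
  norm_num

variable {X : Type*} {l : Filter X} {h : X → ℝ}

theorem comp_zero (F : V → W) (hF : ContDiff ℝ (⊤ : ℕ∞) F) (z0 : V) (Z : X → V)
    (hh : Tendsto h l (𝓝 0)) (hZ : (fun x => Z x - z0) =O[l] h) :
    (fun x => F (Z x) - F z0) =O[l] h := by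
  have ht : Tendsto Z l (𝓝 z0) := by
    simpa using (hZ.trans_tendsto hh).add_const z0
  exact (((hF.differentiable (by simp) z0).isBigO_sub).comp_tendsto ht).trans hZ

theorem bigO_pow_le (hh : Tendsto h l (𝓝 0)) {m n : ℕ} (hmn : m ≤ n) :
    (fun x => h x ^ n) =O[l] fun x => h x ^ m := by
  have : (fun t : ℝ => t ^ n) =O[𝓝 0] fun t => t ^ m := by
    rcases hmn.eq_or_lt with rfl | h1
    · exact isBigO_refl _ _
    · exact (isLittleO_pow_pow h1).isBigO
  exact this.comp_tendsto hh

theorem comp_one (F : V → W) (hF : ContDiff ℝ (⊤ : ℕ∞) F) (z0 : V) (Z : X → V)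
    (hh : Tendsto h l (𝓝 0)) (hZ : (fun x => Z x - z0) =O[l] h) (u : V)
    (hZ1 : (fun x => Z x - z0 - h x • u) =O[l] fun x => h x ^ 2) :
    (fun x => F (Z x) - F z0 - h x • fderiv ℝ F z0 u) =O[l] fun x => h x ^ 2 := by
  have ht : Tendsto Z l (𝓝 z0) := by
    simpa using (hZ.trans_tendsto hh).add_const z0
  have h1 := ((taylor_one F hF z0).comp_tendsto ht).trans (hZ.norm_left.pow 2)
  have h2 := ((fderiv ℝ F z0).isBigO_comp (fun x => Z x - z0 - h x • u) l).trans hZ1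
  refine (h1.add h2).congr_left fun x => ?_
  simp only [Function.comp, map_sub, map_smul]
  abel

theorem bigO_clm_apply {L : X → V →L[ℝ] W} {v : X → V} {a b : X → ℝ}
    (h1 : L =O[l] a) (h2 : v =O[l] b) : (fun x => L x (v x)) =O[l] fun x => a x * b x := by
  refine IsBigO.trans (IsBigO.of_bound 1 (Eventually.of_forall fun x => ?_))
    (h1.norm_left.mul h2.norm_left)
  simpa using (L x).le_opNorm (v x)

theorem comp_two (F : V → W) (hF : ContDiff ℝ (⊤ : ℕ∞) F) (z0 : V) (Z : X → V)
    (hh : Tendsto h l (𝓝 0)) (hZ : (fun x => Z x - z0) =O[l] h) (u q : V)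
    (hZ1 : (fun x => Z x - z0 - h x • u) =O[l] fun x => h x ^ 2)
    (hZ2 : (fun x => Z x - z0 - h x • u - h x ^ 2 • q) =O[l] fun x => h x ^ 3) :
    (fun x => F (Z x) - F z0 - h x • fderiv ℝ F z0 u
      - h x ^ 2 • (fderiv ℝ F z0 q + (1/2 : ℝ) • fderiv ℝ (fderiv ℝ F) z0 u u))
      =O[l] fun x => h x ^ 3 := by
  have ht : Tendsto Z l (𝓝 z0) := by
    simpa using (hZ.trans_tendsto hh).add_const z0
  have h1 := ((taylor_two F hF z0).comp_tendsto ht).trans (hZ.norm_left.pow 3)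
  have h2 := ((fderiv ℝ F z0).isBigO_comp (fun x => Z x - z0 - h x • u - h x ^ 2 • q) l).trans hZ2
  have hu : (fun x => h x • u) =O[l] h := by
    simpa using (isBigO_refl h l).smul (isBigO_const_const u (one_ne_zero (α := ℝ)) l)
  have h3 := bigO_clm_apply (((fderiv ℝ (fderiv ℝ F) z0).isBigO_comp _ l).trans hZ1) hZ
  have h4 := bigO_clm_apply (((fderiv ℝ (fderiv ℝ F) z0).isBigO_comp _ l).trans hu) hZ1
  have h3' : _ =O[l] fun x => h x ^ 3 := h3.congr_right fun x => by ring
  have h4' : _ =O[l] fun x => h x ^ 3 := h4.congr_right fun x => by ring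
  refine ((h1.add h2).add ((h3'.add h4').const_smul_left (1/2 : ℝ))).congr_left fun x => ?_
  simp only [Function.comp, map_sub, map_smul, _root_.sub_apply, _root_.smul_apply, Pi.smul_apply]
  module

theorem mv_real (R R' : ℝ → W) (n : ℕ) (hR : ∀ t, HasDerivAt R (R' t) t) (h0 : R 0 = 0)
    (hO : R' =O[𝓝 0] fun t => t ^ n) : R =O[𝓝 0] fun t => t ^ (n + 1) := by
  have := mv_bigO R (fun t => ContinuousLinearMap.toSpanSingleton ℝ (R' t)) 0 n
    (fun t => (hR t).hasFDerivAt) h0 (by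
      refine IsBigO.of_norm_norm ?_
      simpa using hO.norm_norm)
  refine this.trans (IsBigO.of_norm_norm ?_)
  simpa using isBigO_refl _ _

theorem exact_exp (Φ : W → W) (hΦ : ContDiff ℝ (⊤ : ℕ∞) Φ) (z : ℝ → W)
    (hz : ∀ t, HasDerivAt z (Φ (z t)) t) :
    (fun t => z t - z 0 - t • Φ (z 0) - t ^ 2 • ((1/2 : ℝ) • fderiv ℝ Φ (z 0) (Φ (z 0)))
      - t ^ 3 • ((1/6 : ℝ) • (fderiv ℝ Φ (z 0) (fderiv ℝ Φ (z 0) (Φ (z 0)))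
        + fderiv ℝ (fderiv ℝ Φ) (z 0) (Φ (z 0)) (Φ (z 0)))))
      =O[𝓝 0] fun t => t ^ 4 := by
  have hh : Tendsto (fun t : ℝ => t) (𝓝 0) (𝓝 0) := tendsto_id
  have e0 : (fun t => z t - z 0) =O[𝓝 0] fun t : ℝ => t := by
    simpa using (hz 0).differentiableAt.isBigO_sub
  have d1 := fun t (v : W) => (hasDerivAt_id (𝕜 := ℝ) t).smul_const v
  have d2 := fun t (v : W) => ((hasDerivAt_pow (𝕜 := ℝ) 2 t).smul_const v)
  have d3 := fun t (v : W) => ((hasDerivAt_pow (𝕜 := ℝ) 3 t).smul_const v)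
  have e1 := mv_real (fun t => z t - z 0 - t • Φ (z 0)) (fun t => Φ (z t) - Φ (z 0)) 1
    (fun t => (((hz t).sub_const (z 0)).sub (d1 t (Φ (z 0)))).congr_deriv (by simp)) (by simp)
    (by simpa using comp_zero Φ hΦ (z 0) z hh e0)
  have e2 := mv_real (fun t => z t - z 0 - t • Φ (z 0)
      - t ^ 2 • ((1/2 : ℝ) • fderiv ℝ Φ (z 0) (Φ (z 0))))
    (fun t => Φ (z t) - Φ (z 0) - t • fderiv ℝ Φ (z 0) (Φ (z 0))) 2
    (fun t => by
      refine ((((hz t).sub_const (z 0)).sub (d1 t (Φ (z 0)))).sub (d2 t _)).congr_deriv ?_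
      simp; module) (by simp)
    (comp_one Φ hΦ (z 0) z hh e0 _ e1)
  refine mv_real _ _ 3
    (fun t => ((((hz t).sub_const (z 0)).sub (d1 t (Φ (z 0)))).sub (d2 t _)).sub (d3 t _))
    (by simp) ?_
  refine (comp_two Φ hΦ (z 0) z hh e0 _ _ e1 e2).congr_left fun t => ?_
  simp only [map_smul]
  norm_num
  module

theorem ark_generic [ProperSpace W] {s : ℕ} {K : Type*} [Fintype K]
    (M : K → Fin s → Fin s → ℝ) (b : K → Fin s → ℝ) (F : K → W → W)
    (hF : ∀ k, ContDiff ℝ (⊤ : ℕ∞) (F k)) (z : ℝ → W)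
    (hz : ∀ t, HasDerivAt z (∑ k, F k (z t)) t)
    (H1 : ∀ k, ∑ i, b k i = 1)
    (H2 : ∀ k l, (∑ i, b k i * ∑ j, M l i j) • fderiv ℝ (F k) (z 0) (F l (z 0))
      = (1/2 : ℝ) • fderiv ℝ (F k) (z 0) (F l (z 0)))
    (H3 : ∀ k l m, (∑ i, b k i * (∑ j, M l i j) * (∑ j, M m i j)) •
        fderiv ℝ (fderiv ℝ (F k)) (z 0) (F l (z 0)) (F m (z 0))
      = (1/3 : ℝ) • fderiv ℝ (fderiv ℝ (F k)) (z 0) (F l (z 0)) (F m (z 0)))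
    (H4 : ∀ k l m, (∑ i, ∑ j, b k i * M l i j * (∑ n, M m j n)) •
        fderiv ℝ (F k) (z 0) (fderiv ℝ (F l) (z 0) (F m (z 0)))
      = (1/6 : ℝ) • fderiv ℝ (F k) (z 0) (fderiv ℝ (F l) (z 0) (F m (z 0)))) :
    ∃ C > (0:ℝ), ∃ h₀ > (0:ℝ), ∀ h : ℝ, 0 < h → h ≤ h₀ → ∀ Z : Fin s → W,
      (∀ i, Z i = z 0 + h • ∑ k, ∑ j, M k i j • F k (Z j)) →
      (∀ i, ‖Z i - z 0‖ ≤ 1) →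
      ‖z 0 + h • (∑ k, ∑ i, b k i • F k (Z i)) - z h‖ ≤ C * h ^ 4 := by
  set z0 := z 0 with hz0
  let S : Set (ℝ × (Fin s → W)) := {x | (∀ i, x.2 i = z0 + x.1 • ∑ k, ∑ j, M k i j • F k (x.2 j)) ∧
    ∀ i, ‖x.2 i - z0‖ ≤ 1}
  let l : Filter (ℝ × (Fin s → W)) := comap Prod.fst (𝓝[>] (0:ℝ)) ⊓ 𝓟 S
  let hf : ℝ × (Fin s → W) → ℝ := Prod.fst
  have hh : Tendsto hf l (𝓝 0) :=
    ((tendsto_comap (f := Prod.fst) (x := 𝓝[>] (0:ℝ))).mono_left inf_le_left).mono_right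
      nhdsWithin_le_nhds
  have hS : ∀ᶠ x in l, x ∈ S := (eventually_principal.2 fun x hx => hx).filter_mono inf_le_right
  -- main claim
  have main : (fun x : ℝ × (Fin s → W) => z0 + x.1 • (∑ k, ∑ i, b k i • F k (x.2 i)) - z x.1)
      =O[l] fun x => hf x ^ 4 := by
    have sumO : ∀ (f : K → Fin s → (ℝ × (Fin s → W)) → W) (c : K → Fin s → ℝ)
        (e : ℝ × (Fin s → W) → ℝ), (∀ k j, f k j =O[l] e) →
        (fun x => ∑ k, ∑ j, c k j • f k j x) =O[l] e := fun f c e hfe =>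
      IsBigO.fun_sum fun k _ => IsBigO.fun_sum fun j _ => (hfe k j).const_smul_left (c k j)
    have bdd : ∀ k j, (fun x : ℝ × (Fin s → W) => F k (x.2 j)) =O[l] fun _ => (1:ℝ) := by
      intro k j
      obtain ⟨C, hC⟩ := (isCompact_closedBall z0 1).exists_bound_of_continuousOn
        (hF k).continuous.continuousOn
      refine IsBigO.of_bound C ?_
      filter_upwards [hS] with x hx
      simpa using hC (x.2 j) (by simpa [dist_eq_norm] using hx.2 j)
    have hO : hf =O[l] hf := isBigO_refl _ _
    have a0 : ∀ i, (fun x : ℝ × (Fin s → W) => x.2 i - z0) =O[l] hf := by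
      intro i
      refine IsBigO.congr' (hO.smul (sumO _ (fun k j => M k i j) _ bdd)) ?_ ?_
      · filter_upwards [hS] with x hx
        rw [hx.1 i, add_sub_cancel_left]
      · exact Eventually.of_forall fun x => by simp
    set u : Fin s → W := fun i => ∑ k, ∑ j, M k i j • F k z0 with hu
    have a1 : ∀ i, (fun x : ℝ × (Fin s → W) => x.2 i - z0 - hf x • u i) =O[l]
        fun x => hf x ^ 2 := by
      intro i
      refine IsBigO.congr' (hO.smul (sumO _ (fun k j => M k i j) _
        fun k j => comp_zero (F k) (hF k) z0 _ hh (a0 j))) ?_ ?_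
      · filter_upwards [hS] with x hx
        conv_rhs => rw [hx.1 i, add_sub_cancel_left]
        simp only [hf, hu, ← smul_sub, ← Finset.sum_sub_distrib]
      · exact Eventually.of_forall fun x => by simp [pow_two]
    set q : Fin s → W := fun i => ∑ k, ∑ j, M k i j • fderiv ℝ (F k) z0 (u j) with hq
    have a2 : ∀ i, (fun x : ℝ × (Fin s → W) => x.2 i - z0 - hf x • u i - hf x ^ 2 • q i) =O[l]
        fun x => hf x ^ 3 := by
      intro i
      refine IsBigO.congr' (hO.smul (sumO _ (fun k j => M k i j) _
        fun k j => comp_one (F k) (hF k) z0 _ hh (a0 j) _ (a1 j))) ?_ ?_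
      · filter_upwards [hS] with x hx
        conv_rhs => rw [hx.1 i, add_sub_cancel_left]
        simp only [hf, hu, hq, smul_sub, Finset.sum_sub_distrib, Finset.smul_sum, smul_smul,
          pow_two]
        simp only [mul_comm, mul_left_comm]
      · exact Eventually.of_forall fun x => by simp; ring
    have a3 := hO.smul (sumO _ b _
        fun k j => comp_two (F k) (hF k) z0 _ hh (a0 j) _ _ (a1 j) (a2 j))
    have hΦ : ContDiff ℝ (⊤ : ℕ∞) (fun x => ∑ k, F k x) := ContDiff.sum fun k _ => hF k
    have ex := (exact_exp (fun x => ∑ k, F k x) hΦ z hz).comp_tendsto hh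
    have dF : ∀ k, Differentiable ℝ (F k) := fun k => (hF k).differentiable (by simp)
    have dF2 : ∀ k, Differentiable ℝ (fderiv ℝ (F k)) := fun k =>
      ((hF k).fderiv_right (m := (⊤ : ℕ∞)) (by simp)).differentiable (by simp)
    have fd1 : fderiv ℝ (fun x => ∑ k, F k x) = fun x => ∑ k, fderiv ℝ (F k) x := by
      ext1 x
      exact fderiv_fun_sum fun k _ => dF k x
    have fd2 : fderiv ℝ (fderiv ℝ (fun x => ∑ k, F k x)) z0
        = ∑ k, fderiv ℝ (fderiv ℝ (F k)) z0 := by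
      rw [fd1]
      exact fderiv_fun_sum fun k _ => dF2 k z0
    have A1 : ∑ k, ∑ i, b k i • F k z0 = ∑ k, F k z0 :=
      Finset.sum_congr rfl fun k _ => by rw [← Finset.sum_smul, H1, one_smul]
    have hu' : ∀ i, u i = ∑ k, (∑ j, M k i j) • F k z0 := fun i => by
      simp only [hu, Finset.sum_smul]
    have A2 : ∑ k, ∑ i, b k i • fderiv ℝ (F k) z0 (u i)
        = (1/2 : ℝ) • ∑ k, ∑ l, fderiv ℝ (F k) z0 (F l z0) := by
      simp only [Finset.smul_sum, ← H2, Finset.sum_smul, hu', map_sum, map_smul, mul_smul]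
      exact Finset.sum_congr rfl fun k _ => Finset.sum_comm
    have A3 : ∑ k, ∑ i, b k i • fderiv ℝ (fderiv ℝ (F k)) z0 (u i) (u i)
        = (1/3 : ℝ) • ∑ k, ∑ l, ∑ m, fderiv ℝ (fderiv ℝ (F k)) z0 (F l z0) (F m z0) := by
      simp only [Finset.smul_sum (r := (1/3 : ℝ)), ← H3]
      refine Finset.sum_congr rfl fun k _ => ?_
      simp only [Finset.sum_smul (s := (Finset.univ : Finset (Fin s)))
        (f := fun i => b k i * (∑ j, M _ i j) * (∑ j, M _ i j))]
      rw [Finset.sum_congr rfl fun l _ => Finset.sum_comm, Finset.sum_comm]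
      refine Finset.sum_congr rfl fun i _ => ?_
      simp only [hu', map_sum, map_smul, _root_.sum_apply, _root_.smul_apply, Finset.smul_sum,
        smul_smul]
      rw [Finset.sum_comm]
      refine Finset.sum_congr rfl fun l _ => Finset.sum_congr rfl fun m _ => ?_
      congr 1
      ring
    have A4 : ∑ k, ∑ i, b k i • fderiv ℝ (F k) z0 (q i)
        = (1/6 : ℝ) • ∑ k, ∑ l, ∑ m, fderiv ℝ (F k) z0 (fderiv ℝ (F l) z0 (F m z0)) := by
      simp only [Finset.smul_sum (r := (1/6 : ℝ)), ← H4]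
      refine Finset.sum_congr rfl fun k _ => ?_
      simp only [Finset.sum_smul (s := (Finset.univ : Finset (Fin s)))
        (f := fun i => ∑ j, b k i * M _ i j * (∑ n, M _ j n))]
      rw [Finset.sum_congr rfl fun l _ => Finset.sum_comm, Finset.sum_comm]
      refine Finset.sum_congr rfl fun i _ => ?_
      simp only [hq, map_sum, map_smul, Finset.smul_sum]
      refine Finset.sum_congr rfl fun l _ => ?_
      simp only [Finset.sum_smul (s := (Finset.univ : Finset (Fin s)))
        (f := fun j => b k i * M l i j * (∑ n, M _ j n))]
      rw [Finset.sum_comm]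
      refine Finset.sum_congr rfl fun j _ => ?_
      simp only [hu', map_sum, map_smul, Finset.smul_sum, smul_smul]
      exact Finset.sum_congr rfl fun m _ => by rw [mul_assoc]
    have a3' : _ =O[l] fun x => hf x ^ 4 := a3.congr_right fun x => by simp; ring
    refine (a3'.sub ex).congr_left fun x => ?_
    rw [fd2]
    simp only [fd1, Function.comp, ← hz0, map_sum, _root_.sum_apply]
    have e1 : ∑ k, ∑ l, fderiv ℝ (F l) z0 (F k z0) = ∑ k, ∑ l, fderiv ℝ (F k) z0 (F l z0) :=
      Finset.sum_comm
    have e2 : ∑ m, ∑ l, ∑ k, fderiv ℝ (F k) z0 (fderiv ℝ (F l) z0 (F m z0))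
        = ∑ k, ∑ l, ∑ m, fderiv ℝ (F k) z0 (fderiv ℝ (F l) z0 (F m z0)) := by
      rw [Finset.sum_comm, Finset.sum_congr rfl fun l _ => Finset.sum_comm, Finset.sum_comm]
    have e3 : ∑ m, ∑ l, ∑ k, fderiv ℝ (fderiv ℝ (F k)) z0 (F l z0) (F m z0)
        = ∑ k, ∑ l, ∑ m, fderiv ℝ (fderiv ℝ (F k)) z0 (F l z0) (F m z0) := by
      rw [Finset.sum_comm, Finset.sum_congr rfl fun l _ => Finset.sum_comm, Finset.sum_comm]
    have e4 : ∑ k, ∑ j, b k j • (F k (x.2 j) - F k z0 - hf x • fderiv ℝ (F k) z0 (u j)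
          - hf x ^ 2 • (fderiv ℝ (F k) z0 (q j)
            + (1/2 : ℝ) • fderiv ℝ (fderiv ℝ (F k)) z0 (u j) (u j)))
        = ∑ k, ∑ j, b k j • F k (x.2 j) - ∑ k, ∑ j, b k j • F k z0
          - hf x • ∑ k, ∑ j, b k j • fderiv ℝ (F k) z0 (u j)
          - hf x ^ 2 • (∑ k, ∑ j, b k j • fderiv ℝ (F k) z0 (q j)
            + (1/2 : ℝ) • ∑ k, ∑ j, b k j • fderiv ℝ (fderiv ℝ (F k)) z0 (u j) (u j)) := by
      simp only [Finset.smul_sum, ← Finset.sum_sub_distrib, ← Finset.sum_add_distrib]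
      exact Finset.sum_congr rfl fun k _ => Finset.sum_congr rfl fun j _ => by module
    rw [e4, A1, A2, A3, A4]
    simp only [e1, e2, e3]
    simp only [hf]
    module
  obtain ⟨C, hC⟩ := main.bound
  rw [eventually_inf_principal, eventually_comap] at hC
  obtain ⟨δ, hδ, hb⟩ := (mem_nhdsGT_iff_exists_Ioc_subset).1 hC
  refine ⟨|C| + 1, by positivity, δ, hδ, fun h h0 h1 Z hZ hZ1 => ?_⟩
  have := hb ⟨h0, h1⟩ (h, Z) rfl ⟨hZ, hZ1⟩
  refine this.trans ?_
  simp only [hf, norm_pow, Real.norm_eq_abs, abs_of_pos h0]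
  gcongr
  linarith [le_abs_self C]

end Gen

section Mid
open Filter Topology

section Zero
variable {V W : Type*} [NormedAddCommGroup V] [NormedSpace ℝ V]
  [NormedAddCommGroup W] [NormedSpace ℝ W]

theorem fderiv_line_const {F : V → W} {z v : V} (hF : DifferentiableAt ℝ F z)
    (h : ∀ t : ℝ, F (z + t • v) = F z) : fderiv ℝ F z v = 0 := by
  have h1 : HasLineDerivAt ℝ F (fderiv ℝ F z v) z v := hF.hasFDerivAt.hasLineDerivAt v
  have h2 : HasLineDerivAt ℝ F 0 z v := by
    unfold HasLineDerivAt
    simp only [h]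
    exact hasDerivAt_const _ _
  exact h1.unique h2

theorem snd_left {F : V → W} (hF : ContDiff ℝ (⊤ : ℕ∞) F) {z v w : V}
    (h : ∀ t : ℝ, fderiv ℝ F (z + t • w) v = fderiv ℝ F z v) :
    fderiv ℝ (fderiv ℝ F) z w v = 0 := by
  have hd : Differentiable ℝ (fderiv ℝ F) :=
    (hF.fderiv_right (m := (⊤ : ℕ∞)) (by simp)).differentiable (by simp)
  have h1 : HasFDerivAt (fun x => fderiv ℝ F x v) ((fderiv ℝ (fderiv ℝ F) z).flip v) z := by
    simpa using (hd z).hasFDerivAt.clm_apply (hasFDerivAt_const v z)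
  have := fderiv_line_const (F := fun x => fderiv ℝ F x v) (z := z) (v := w)
    h1.differentiableAt h
  rw [h1.fderiv] at this
  simpa using this

/-- If second differences vanish, the mixed second derivative vanishes. -/
theorem snd_zero {F : V → W} (hF : ContDiff ℝ (⊤ : ℕ∞) F) {v w : V}
    (h : ∀ (z : V) (s t : ℝ), F (z + s • w + t • v) - F (z + s • w) = F (z + t • v) - F z) (z : V) :
    fderiv ℝ (fderiv ℝ F) z w v = 0 := by
  refine snd_left hF fun s => ?_
  have hd : Differentiable ℝ F := hF.differentiable (by simp)
  have h1 : HasFDerivAt (fun x => F (x + s • w) - F x)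
      (fderiv ℝ F (z + s • w) - fderiv ℝ F z) z := by
    refine HasFDerivAt.sub ?_ (hd z).hasFDerivAt
    exact (hasFDerivAt_comp_add_right (s • w)).2 (hd _).hasFDerivAt
  have := fderiv_line_const (z := z) (v := v) h1.differentiableAt (fun t => by
    have := h z s t
    rw [add_right_comm, sub_eq_iff_eq_add] at this
    rw [this]; abel)
  rw [h1.fderiv] at this
  exact sub_eq_zero.1 (by simpa using this)

end Zero

variable {E : Type*} [NormedAddCommGroup E] [NormedSpace ℝ E]

/-- Injection of an adjoint component. -/
noncomputable def injP (σ : Bool) : E →L[ℝ] E × E × E :=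
  (ContinuousLinearMap.inr ℝ E (E × E)).comp
    (bif σ then ContinuousLinearMap.inr ℝ E E else ContinuousLinearMap.inl ℝ E E)

/-- Projection on an adjoint component. -/
def prP (κ : Bool) (z : E × E × E) : E := bif κ then z.2.2 else z.2.1

/-- The six vector fields of the additive splitting. -/
noncomputable def fld (yf : Bool → E → E) (pf : Bool → E → E → E) :
    Option Bool × Bool → E × E × E → E × E × E
  | (none, κ), z => (yf κ z.1, 0, 0)
  | (some σ, κ), z => injP σ (pf κ z.1 (prP κ z))

/-- The adjoint tableau. -/
noncomputable def adjT {s : ℕ} (om : Bool → Fin s → ℝ) (A : Bool → Fin s → Fin s → ℝ)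
    (σ κ : Bool) (i j : Fin s) : ℝ := om κ j - om κ j / om σ i * A σ j i

/-- The combined tableau. -/
noncomputable def tabM {s : ℕ} (om : Bool → Fin s → ℝ) (A : Bool → Fin s → Fin s → ℝ) :
    Option Bool × Bool → Fin s → Fin s → ℝ
  | (none, κ) => A κ
  | (some σ, κ) => adjT om A σ κ

section Coef
variable {s : ℕ} (om : Bool → Fin s → ℝ) (A : Bool → Fin s → Fin s → ℝ)
  (om0 : ∀ κ i, om κ i ≠ 0)
  (w1 : ∀ κ, ∑ i, om κ i = 1)
  (w2 : ∀ κ l, ∑ i, om κ i * ∑ j, A l i j = 1 / 2)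
  (w3 : ∀ κ l m, ∑ i, om κ i * (∑ j, A l i j) * (∑ j, A m i j) = 1 / 3)
  (w4 : ∀ κ l m, ∑ i, ∑ j, om κ i * A l i j * (∑ n, A m j n) = 1 / 6)

include om0 in
theorem adj_key (σ l : Bool) (i j : Fin s) :
    om σ i * adjT om A σ l i j = om l j * om σ i - om l j * A σ j i := by
  have := om0 σ i
  unfold adjT
  field_simp

include om0 w1 in
theorem coef_I4 (σ l : Bool) (x : Fin s → ℝ) :
    ∑ i, ∑ j, om σ i * adjT om A σ l i j * x j
      = ∑ j, om l j * x j - ∑ j, om l j * (∑ n, A σ j n) * x j := by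
  simp only [adj_key om A om0]
  rw [Finset.sum_comm, ← Finset.sum_sub_distrib]
  refine Finset.sum_congr rfl fun j _ => ?_
  rw [← Finset.sum_mul, Finset.sum_sub_distrib, ← Finset.mul_sum, ← Finset.mul_sum, w1]
  ring

include om0 w1 w2 in
theorem coef_I2 (σ l : Bool) : ∑ i, om σ i * ∑ j, adjT om A σ l i j = 1 / 2 := by
  have := coef_I4 om A om0 w1 σ l (fun _ => 1)
  simp only [mul_one] at this
  rw [w1, w2] at this
  simp only [Finset.mul_sum, this]
  norm_num

include om0 w1 w2 w4 in
theorem coef_I3 (σ l m : Bool) :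
    ∑ i, om σ i * (∑ j, A l i j) * (∑ j, adjT om A σ m i j) = 1 / 3 := by
  have e : ∀ i, om σ i * (∑ j, A l i j) * (∑ j, adjT om A σ m i j)
      = om σ i * (∑ j, A l i j) - ∑ j, om m j * A σ j i * (∑ n, A l i n) := by
    intro i
    have e1 : om σ i * (∑ j, adjT om A σ m i j) = om σ i - ∑ j, om m j * A σ j i := by
      rw [Finset.mul_sum]
      simp only [adj_key om A om0]
      rw [Finset.sum_sub_distrib, ← Finset.sum_mul, w1, one_mul]
    rw [mul_right_comm, e1, sub_mul, ← Finset.sum_mul]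
  simp only [e]
  rw [Finset.sum_sub_distrib, Finset.sum_comm, w2, w4]
  norm_num

include om0 w1 w2 w3 w4 in
theorem mid (yf : Bool → E → E) (pf : Bool → E → E → E) [FiniteDimensional ℝ E]
    (hyf : ∀ κ, ContDiff ℝ (⊤ : ℕ∞) (yf κ))
    (hpf : ∀ κ, ContDiff ℝ (⊤ : ℕ∞) (fun z : E × E => pf κ z.1 z.2))
    (hadd : ∀ κ x q v, pf κ x (q + v) = pf κ x q + pf κ x v)
    (z : ℝ → E × E × E) (hz : ∀ t, HasDerivAt z (∑ k, fld yf pf k (z t)) t) :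
    ∃ C > (0:ℝ), ∃ h₀ > (0:ℝ), ∀ h : ℝ, 0 < h → h ≤ h₀ → ∀ Z : Fin s → E × E × E,
      (∀ i, Z i = z 0 + h • ∑ k, ∑ j, tabM om A k i j • fld yf pf k (Z j)) →
      (∀ i, ‖Z i - z 0‖ ≤ 1) →
      ‖z 0 + h • (∑ k, ∑ i, om k.2 i • fld yf pf k (Z i)) - z h‖ ≤ C * h ^ 4 := by
  have hpr : ∀ κ, ContDiff ℝ (⊤ : ℕ∞) (prP κ : E × E × E → E) := by
    intro κ; cases κ
    · exact contDiff_fst.comp contDiff_snd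
    · exact contDiff_snd.comp contDiff_snd
  have hq : ∀ κ, ContDiff ℝ (⊤ : ℕ∞) (fun z : E × E × E => pf κ z.1 (prP κ z)) := fun κ =>
    (hpf κ).comp (contDiff_fst.prodMk (hpr κ))
  have hF : ∀ k, ContDiff ℝ (⊤ : ℕ∞) (fld yf pf k) := by
    rintro ⟨_ | σ, κ⟩
    · exact ((hyf κ).comp contDiff_fst).prodMk contDiff_const
    · exact (injP σ).contDiff.comp (hq κ)
  have hD : ∀ k, Differentiable ℝ (fld yf pf k) := fun k => (hF k).differentiable (by simp)
  have pradd : ∀ κ (z v : E × E × E) (t : ℝ), prP κ (z + t • v) = prP κ z + t • prP κ v := by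
    intro κ z v t; cases κ <;> simp [prP]
  -- values
  have v1 : ∀ σ κ z, (fld yf pf (some σ, κ) z).1 = 0 := by
    intro σ κ z; simp [fld, injP]
  have v2 : ∀ σ (q : E), prP (!σ) (injP σ q) = 0 := by
    intro σ q; cases σ <;> simp [prP, injP]
  -- invariance
  have inv : ∀ ν κ (z v : E × E × E) (t : ℝ), v.1 = 0 → (prP κ v = 0 ∨ ν = none) →
      fld yf pf (ν, κ) (z + t • v) = fld yf pf (ν, κ) z := by
    intro ν κ z v t h1 h2
    rcases ν with _ | σ
    · simp [fld, h1]
    · have h2 : prP κ v = 0 := by simpa using h2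
      simp [fld, h1, h2, pradd]
  have Za : ∀ ν κ (z v : E × E × E), v.1 = 0 → (prP κ v = 0 ∨ ν = none) →
      fderiv ℝ (fld yf pf (ν, κ)) z v = 0 := fun ν κ z v h1 h2 =>
    fderiv_line_const (hD _ z) fun t => inv ν κ z v t h1 h2
  have Zr : ∀ ν κ (z v w : E × E × E), v.1 = 0 → (prP κ v = 0 ∨ ν = none) →
      fderiv ℝ (fderiv ℝ (fld yf pf (ν, κ))) z w v = 0 := fun ν κ z v w h1 h2 =>
    snd_left (hF _) fun t => by rw [Za _ _ _ _ h1 h2, Za _ _ _ _ h1 h2]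
  have Zl : ∀ ν κ (z v w : E × E × E), v.1 = 0 → (prP κ v = 0 ∨ ν = none) →
      fderiv ℝ (fderiv ℝ (fld yf pf (ν, κ))) z v w = 0 := fun ν κ z v w h1 h2 =>
    snd_zero (hF _) (fun z s t => by
      rw [add_right_comm, inv ν κ _ v s h1 h2, inv ν κ _ v s h1 h2]) z
  have Zpp : ∀ ν κ (z v w : E × E × E), v.1 = 0 → w.1 = 0 →
      fderiv ℝ (fderiv ℝ (fld yf pf (ν, κ))) z v w = 0 := fun ν κ z v w h1 h2 => by
    rcases ν with _ | σ
    · exact Zl _ _ _ _ _ h1 (Or.inr rfl)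
    · refine snd_zero (hF _) (fun z s t => ?_) z
      simp [fld, h1, h2, pradd, hadd]
  have fdp : ∀ σ κ (z v : E × E × E), ∃ q, fderiv ℝ (fld yf pf (some σ, κ)) z v = injP σ q := by
    intro σ κ z v
    have h1 : HasFDerivAt (fld yf pf (some σ, κ)) _ z :=
      (injP (E := E) σ).hasFDerivAt.comp z ((hq κ).differentiable (by simp) z).hasFDerivAt
    rw [h1.fderiv]
    exact ⟨_, rfl⟩
  have bad : ∀ σ κ, σ ≠ κ → κ = !σ := by decide
  have vbad : ∀ σ κ l z, σ ≠ κ → prP κ (fld yf pf (some σ, l) z) = 0 := by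
    intro σ κ l z h
    rw [bad σ κ h]; exact v2 σ _
  refine ark_generic (tabM om A) (fun k => om k.2) (fld yf pf) hF z hz (fun k => w1 _) ?_ ?_ ?_
  · rintro ⟨ν, κ⟩ ⟨_ | σ, l⟩
    · simp only [tabM, w2]
    · by_cases h : σ = κ
      · subst h
        simp only [tabM, coef_I2 om A om0 w1 w2]
      · rw [Za _ _ _ _ (v1 _ _ _) (Or.inl (vbad _ _ _ _ h))]; simp
  · rintro ⟨ν, κ⟩ ⟨_ | σ, l⟩ ⟨_ | τ, m⟩
    · simp only [tabM, w3]
    · by_cases h : τ = κ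
      · subst h
        simp only [tabM, coef_I3 om A om0 w1 w2 w4]
      · rw [Zr _ _ _ _ _ (v1 _ _ _) (Or.inl (vbad _ _ _ _ h))]; simp
    · by_cases h : σ = κ
      · subst h
        simp only [tabM, mul_right_comm _ (∑ j, adjT om A _ _ _ j) _,
          coef_I3 om A om0 w1 w2 w4]
      · rw [Zl _ _ _ _ _ (v1 _ _ _) (Or.inl (vbad _ _ _ _ h))]; simp
    · rw [Zpp _ _ _ _ _ (v1 _ _ _) (v1 _ _ _)]; simp
  · rintro ⟨ν, κ⟩ ⟨_ | σ, l⟩ ⟨_ | τ, m⟩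
    · simp only [tabM, w4]
    · rw [Za none l _ _ (v1 _ _ _) (Or.inr rfl)]; simp
    · by_cases h : σ = κ
      · subst h
        simp only [tabM]
        rw [coef_I4 om A om0 w1, w2, w3]
        norm_num
      · obtain ⟨q, hq⟩ := fdp σ l (z 0) (fld yf pf (none, m) (z 0))
        rw [hq, Za _ _ _ _ (by simp [injP]) (Or.inl (by rw [bad σ κ h]; exact v2 _ _))]; simp
    · by_cases h' : τ = l
      · subst h'
        by_cases h : σ = κ
        · subst h
          simp only [tabM]
          rw [coef_I4 om A om0 w1, coef_I2 om A om0 w1 w2, coef_I3 om A om0 w1 w2 w4]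
          norm_num
        · obtain ⟨q, hq⟩ := fdp σ τ (z 0) (fld yf pf (some τ, m) (z 0))
          rw [hq, Za _ _ _ _ (by simp [injP]) (Or.inl (by rw [bad σ κ h]; exact v2 _ _))]; simp
      · rw [Za (some σ) l _ _ (v1 _ _ _) (Or.inl (vbad _ _ _ _ h'))]; simp

end Coef
end Mid

theorem contDiff_jac {d : ℕ} (g : (Fin d → ℝ) → (Fin d → ℝ)) (hg : ContDiff ℝ (⊤ : ℕ∞) g)
    (i j : Fin d) : ContDiff ℝ (⊤ : ℕ∞) (fun x => jacMat g x i j) := by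
  have h : ContDiff ℝ (⊤ : ℕ∞) (fderiv ℝ g) := hg.fderiv_right (by simp)
  have h2 : ContDiff ℝ (⊤ : ℕ∞) (fun x => fderiv ℝ g x (Pi.single j 1)) :=
    h.clm_apply contDiff_const
  exact contDiff_pi.1 h2 i

/-- Theorem 1, third-order part (first alternative): if the IMEX Runge–Kutta
method satisfies the third-order conditions of additive Runge–Kutta methods
together with the extra conditions `Σ ω_i γ_i² = Σ ω_i γ̃_i² = Σ ω_i γ_i γ̃_i = 1/3`,
then one step of the combined forward–adjoint scheme has a local error of
order `h⁴`. -/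
theorem imex_adjoint_third_order_alt1 (s d : ℕ) (hs : 1 ≤ s) (hd : 1 ≤ d)
    (ta a : Fin s → Fin s → ℝ) (tw w : Fin s → ℝ)
    (hta : ∀ i j : Fin s, i ≤ j → ta i j = 0)
    (ha : ∀ i j : Fin s, i < j → a i j = 0)
    (htw0 : ∀ i, tw i ≠ 0) (hw0 : ∀ i, w i ≠ 0)
    (tα α tβ β : Fin s → Fin s → ℝ)
    (htα : ∀ i j, tα i j = tw j - (tw j / tw i) * ta j i)
    (hα : ∀ i j, α i j = w j - (w j / tw i) * ta j i)
    (htβ : ∀ i j, tβ i j = tw j - (tw j / w i) * a j i)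
    (hβ : ∀ i j, β i j = w j - (w j / w i) * a j i)
    (ε : ℝ) (hε : 0 < ε)
    (D Dbar : Matrix (Fin d) (Fin d) ℝ)
    (g r : (Fin d → ℝ) → (Fin d → ℝ))
    (hg : ContDiff ℝ (⊤ : ℕ∞) g) (hr : ContDiff ℝ (⊤ : ℕ∞) r)
    (hgb : ∀ n : ℕ, ∃ C, ∀ x, ‖iteratedFDeriv ℝ n g x‖ ≤ C)
    (hrb : ∀ n : ℕ, ∃ C, ∀ x, ‖iteratedFDeriv ℝ n r x‖ ≤ C)
    -- third-order conditions of additive Runge–Kutta methods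
    (hord1 : ∑ i, tw i = 1) (hord1' : ∑ i, w i = 1)
    (ct c : Fin s → ℝ)
    (hct : ∀ i, ct i = ∑ j, ta i j) (hc : ∀ i, c i = ∑ j, a i j)
    (hord2 : ∀ w' ∈ ({tw, w} : Set (Fin s → ℝ)), ∀ d' ∈ ({ct, c} : Set (Fin s → ℝ)),
      ∑ i, w' i * d' i = 1 / 2)
    (hord3a : ∀ w' ∈ ({tw, w} : Set (Fin s → ℝ)), ∀ d' ∈ ({ct, c} : Set (Fin s → ℝ)),
      ∀ e' ∈ ({ct, c} : Set (Fin s → ℝ)), ∑ i, w' i * d' i * e' i = 1 / 3)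
    (hord3b : ∀ w' ∈ ({tw, w} : Set (Fin s → ℝ)),
      ∀ m ∈ ({ta, a} : Set (Fin s → Fin s → ℝ)), ∀ d' ∈ ({ct, c} : Set (Fin s → ℝ)),
      ∑ i, ∑ j, w' i * m i j * d' j = 1 / 6)
    -- row sums of the adjoint coefficients
    (gt ga : Fin s → ℝ)
    (hgt : ∀ i, gt i = ∑ j, tα i j) (hga : ∀ i, ga i = ∑ j, α i j)
    (hextra1 : ∑ i, w i * ga i ^ 2 = 1 / 3)
    (hextra2 : ∑ i, w i * gt i ^ 2 = 1 / 3)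
    (hextra3 : ∑ i, w i * ga i * gt i = 1 / 3)
    -- exact solution of the coupled forward–adjoint system
    (y pt p : ℝ → Fin d → ℝ)
    (hy : ∀ t, HasDerivAt y (D *ᵥ g (y t) + ε⁻¹ • r (y t)) t)
    (hpt : ∀ t, HasDerivAt pt
      (-(((jacMat g (y t))ᵀ * Dbar) *ᵥ pt t)
        - ε⁻¹ • ((jacMat r (y t))ᵀ *ᵥ p t)) t)
    (hp : ∀ t, HasDerivAt p
      (-(((jacMat g (y t))ᵀ * Dbar) *ᵥ pt t)
        - ε⁻¹ • ((jacMat r (y t))ᵀ *ᵥ p t)) t)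
    (h0eq : pt 0 = p 0) :
    ∃ C > (0:ℝ), ∃ h₀ > (0:ℝ), ∀ h : ℝ, 0 < h → h ≤ h₀ →
      ∀ Y tP P : Fin s → Fin d → ℝ,
      (∀ i, Y i = y 0
          + h • ∑ j ∈ univ.filter (fun j => j < i), ta i j • (D *ᵥ g (Y j))
          + h • ∑ j ∈ univ.filter (fun j => j ≤ i), a i j • (ε⁻¹ • r (Y j))) →
      (∀ i, tP i = p 0
          - h • ∑ j, tα i j • (((jacMat g (Y j))ᵀ * Dbar) *ᵥ tP j)
          - h • ∑ j, α i j • (ε⁻¹ • ((jacMat r (Y j))ᵀ *ᵥ P j))) →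
      (∀ i, P i = p 0
          - h • ∑ j, tβ i j • (((jacMat g (Y j))ᵀ * Dbar) *ᵥ tP j)
          - h • ∑ j, β i j • (ε⁻¹ • ((jacMat r (Y j))ᵀ *ᵥ P j))) →
      (∀ i, ‖Y i - y 0‖ ≤ 1 ∧ ‖tP i - p 0‖ ≤ 1 ∧ ‖P i - p 0‖ ≤ 1) →
      ‖(y 0 + h • ∑ i, tw i • (D *ᵥ g (Y i))
            + h • ∑ i, w i • (ε⁻¹ • r (Y i))) - y h‖
      + ‖(pt 0 - h • ∑ i, tw i • (((jacMat g (Y i))ᵀ * Dbar) *ᵥ tP i)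
               - h • ∑ i, w i • (ε⁻¹ • ((jacMat r (Y i))ᵀ *ᵥ P i))) - pt h‖
      + ‖(p 0 - h • ∑ i, tw i • (((jacMat g (Y i))ᵀ * Dbar) *ᵥ tP i)
              - h • ∑ i, w i • (ε⁻¹ • ((jacMat r (Y i))ᵀ *ᵥ P i))) - p h‖
      ≤ C * h ^ 4 := by
  classical
  let om : Bool → Fin s → ℝ := fun κ => bif κ then w else tw
  let A : Bool → Fin s → Fin s → ℝ := fun κ => bif κ then a else ta
  let yf : Bool → (Fin d → ℝ) → (Fin d → ℝ) := fun κ x =>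
    bif κ then ε⁻¹ • r x else D *ᵥ g x
  let pf : Bool → (Fin d → ℝ) → (Fin d → ℝ) → (Fin d → ℝ) := fun κ x q =>
    bif κ then -(ε⁻¹ • ((jacMat r x)ᵀ *ᵥ q)) else -(((jacMat g x)ᵀ * Dbar) *ᵥ q)
  have hom : ∀ κ, om κ ∈ ({tw, w} : Set (Fin s → ℝ)) := by intro κ; cases κ <;> simp [om]
  have hA : ∀ κ, A κ ∈ ({ta, a} : Set (Fin s → Fin s → ℝ)) := by intro κ; cases κ <;> simp [A]
  have hA' : ∀ κ, (fun i => ∑ j, A κ i j) ∈ ({ct, c} : Set (Fin s → ℝ)) := by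
    intro κ
    cases κ
    · left; funext i; simp [A, hct]
    · right; funext i; simp [A, hc]
  have hyf : ∀ κ, ContDiff ℝ (⊤ : ℕ∞) (yf κ) := by
    intro κ; cases κ
    · refine contDiff_pi.2 fun i => ?_
      simp only [yf, cond_false, Matrix.mulVec, dotProduct]
      exact ContDiff.sum fun j _ => contDiff_const.mul (contDiff_pi.1 hg j)
    · exact hr.const_smul ε⁻¹
  have hpf : ∀ κ, ContDiff ℝ (⊤ : ℕ∞)
      (fun z : (Fin d → ℝ) × (Fin d → ℝ) => pf κ z.1 z.2) := by
    have hq : ∀ j, ContDiff ℝ (⊤ : ℕ∞) (fun z : (Fin d → ℝ) × (Fin d → ℝ) => z.2 j) :=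
      fun j => contDiff_pi.1 contDiff_snd j
    intro κ; cases κ
    · refine contDiff_pi.2 fun i => ?_
      simp only [pf, cond_false, Pi.neg_apply, Matrix.mulVec, dotProduct, Matrix.mul_apply,
        Matrix.transpose_apply]
      exact ContDiff.neg (ContDiff.sum fun j _ => ContDiff.mul (ContDiff.sum fun k _ =>
        ((contDiff_jac g hg k i).comp contDiff_fst).mul contDiff_const) (hq j))
    · refine contDiff_pi.2 fun i => ?_
      simp only [pf, cond_true, Pi.neg_apply, Pi.smul_apply, smul_eq_mul, Matrix.mulVec,
        dotProduct, Matrix.transpose_apply]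
      exact ContDiff.neg (contDiff_const.mul (ContDiff.sum fun j _ => ContDiff.mul
        ((contDiff_jac r hr j i).comp contDiff_fst) (hq j)))
  have hadd : ∀ κ x q v, pf κ x (q + v) = pf κ x q + pf κ x v := by
    intro κ x q v
    cases κ
    · simp only [pf, cond_false, Matrix.mulVec_add, neg_add]
    · simp only [pf, cond_true, Matrix.mulVec_add, neg_add, smul_add]
  have hz : ∀ t, HasDerivAt (fun t => (y t, pt t, p t))
      (∑ k, fld yf pf k (y t, pt t, p t)) t := by
    intro t
    refine ((hy t).prodMk ((hpt t).prodMk (hp t))).congr_deriv ?_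
    simp only [Fintype.sum_prod_type, Fintype.sum_option, Fintype.sum_bool, fld, injP, prP, yf, pf,
      cond_true, cond_false, ContinuousLinearMap.comp_apply, ContinuousLinearMap.inl_apply,
      ContinuousLinearMap.inr_apply, Prod.mk_add_mk]
    refine Prod.ext ?_ (Prod.ext ?_ ?_) <;> simp <;> abel
  obtain ⟨C, hC, h₀, hh₀, H⟩ := mid om A
    (by intro κ i; cases κ; exacts [htw0 i, hw0 i])
    (by intro κ; cases κ; exacts [hord1, hord1'])
    (fun κ l => hord2 _ (hom κ) _ (hA' l))
    (fun κ l m => hord3a _ (hom κ) _ (hA' l) _ (hA' m))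
    (fun κ l m => hord3b _ (hom κ) _ (hA l) _ (hA' m))
    yf pf hyf hpf hadd (fun t => (y t, pt t, p t)) hz
  refine ⟨3 * C, by positivity, h₀, hh₀, fun h hpos hle Y tP P hY htP hP hb => ?_⟩
  have fs1 : ∀ i (f : Fin s → Fin d → ℝ), ∑ j ∈ univ.filter (fun j => j < i), ta i j • f j
      = ∑ j, ta i j • f j := by
    intro i f
    refine Finset.sum_subset (Finset.filter_subset _ _) fun j _ hj => ?_
    rw [hta i j (by simpa using hj), zero_smul]
  have fs2 : ∀ i (f : Fin s → Fin d → ℝ), ∑ j ∈ univ.filter (fun j => j ≤ i), a i j • f j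
      = ∑ j, a i j • f j := by
    intro i f
    refine Finset.sum_subset (Finset.filter_subset _ _) fun j _ hj => ?_
    rw [ha i j (by simpa using hj), zero_smul]
  have e1 : ∀ i j, adjT om A false false i j = tα i j := fun i j => by simp [adjT, om, A, htα]
  have e2 : ∀ i j, adjT om A false true i j = α i j := fun i j => by simp [adjT, om, A, hα]
  have e3 : ∀ i j, adjT om A true false i j = tβ i j := fun i j => by simp [adjT, om, A, htβ]
  have e4 : ∀ i j, adjT om A true true i j = β i j := fun i j => by simp [adjT, om, A, hβ]
  have key := H h hpos hle (fun i => (Y i, tP i, P i)) (by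
    intro i
    refine Prod.ext ?_ (Prod.ext ?_ ?_)
    · have := hY i
      rw [fs1, fs2] at this
      simp [Fintype.sum_prod_type, Fintype.sum_option, fld, tabM, injP, prP, yf, pf, A,
        Prod.fst_sum, Prod.snd_sum]
      rw [this]
      module
    · have := htP i
      simp [Fintype.sum_prod_type, Fintype.sum_option, fld, tabM, injP, prP, yf, pf,
        Prod.fst_sum, Prod.snd_sum, e1, e2, e3, e4]
      rw [this, h0eq]
      module
    · have := hP i
      simp [Fintype.sum_prod_type, Fintype.sum_option, fld, tabM, injP, prP, yf, pf,
        Prod.fst_sum, Prod.snd_sum, e1, e2, e3, e4]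
      rw [this]
      module)
    (by
      intro i
      obtain ⟨b1, b2, b3⟩ := hb i
      simp only [Prod.mk_sub_mk, Prod.norm_mk, sup_le_iff, h0eq]
      exact ⟨b1, b2, b3⟩)
  have n1 := (norm_fst_le _).trans key
  have n2 := ((norm_fst_le _).trans (norm_snd_le _)).trans key
  have n3 := ((norm_snd_le _).trans (norm_snd_le _)).trans key
  have g1 : (y 0 + h • ∑ i, tw i • (D *ᵥ g (Y i)) + h • ∑ i, w i • (ε⁻¹ • r (Y i))) - y h
      = ((y 0, pt 0, p 0) + h • (∑ k, ∑ i, om k.2 i • fld yf pf k (Y i, tP i, P i))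
        - (y h, pt h, p h)).1 := by
    simp [Fintype.sum_prod_type, Fintype.sum_option, fld, injP, prP, yf, pf, om,
        Prod.fst_sum, Prod.snd_sum]
    module
  have g2 : (pt 0 - h • ∑ i, tw i • (((jacMat g (Y i))ᵀ * Dbar) *ᵥ tP i)
               - h • ∑ i, w i • (ε⁻¹ • ((jacMat r (Y i))ᵀ *ᵥ P i))) - pt h
      = ((y 0, pt 0, p 0) + h • (∑ k, ∑ i, om k.2 i • fld yf pf k (Y i, tP i, P i))
        - (y h, pt h, p h)).2.1 := by
    simp [Fintype.sum_prod_type, Fintype.sum_option, fld, injP, prP, yf, pf, om,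
        Prod.fst_sum, Prod.snd_sum]
    module
  have g3 : (p 0 - h • ∑ i, tw i • (((jacMat g (Y i))ᵀ * Dbar) *ᵥ tP i)
               - h • ∑ i, w i • (ε⁻¹ • ((jacMat r (Y i))ᵀ *ᵥ P i))) - p h
      = ((y 0, pt 0, p 0) + h • (∑ k, ∑ i, om k.2 i • fld yf pf k (Y i, tP i, P i))
        - (y h, pt h, p h)).2.2 := by
    simp [Fintype.sum_prod_type, Fintype.sum_option, fld, injP, prP, yf, pf, om,
        Prod.fst_sum, Prod.snd_sum]
    module
  rw [g1, g2, g3]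
  linarith
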